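/- For any m ≥ 1 there exist two spherical harmonics u_1, u_2 of degree m on S^2 whose set of common zeros consists of exactly 2m points. -/

import Mathlib

open MvPolynomial

/-!
Let `w = x + iy` and let `z` be the third coordinate. The harmonic polynomials `Im w^(n+1)` and
`Re w^(n+1) + z * Im w^n` vanish together on a union of lines through the origin, none of which
lies in the plane `z = 0`, so each line meets the sphere in two points and the plane `z = 1` in
one. In the plane `z = 1`, the two equations say for `w ≠ 0` that `w / conj w` is an `(n+1)`-th root
of unity and that `w` is on the circle `|2w - i| = 1`. On this circle `w / conj w = 1 + 2iw`, so the
zeros in the chart correspond to the `n + 1` roots of unity `1 + 2iw`, the root `1` being the pole.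
-/

namespace SphericalHarmonic

section Polynomials

variable {σ R : Type*}

theorem eval_smul_of_isHomogeneous [CommSemiring R] {p : MvPolynomial σ R} {n : ℕ}
    (hp : p.IsHomogeneous n) (c : R) (x : σ → R) : eval (c • x) p = c ^ n * eval x p := by
  simp only [eval_eq, Finset.mul_sum]
  refine Finset.sum_congr rfl fun d hd => ?_
  have hdeg : ∑ i ∈ d.support, d i = n := by
    rw [← hp (mem_support_iff.mp hd), Finsupp.weight_apply, Finsupp.sum]
    simp
  simp only [Pi.smul_apply, smul_eq_mul, mul_pow, Finset.prod_mul_distrib,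
    Finset.prod_pow_eq_pow_sum, hdeg]
  ring

variable [CommRing R]

theorem pderiv_pderiv_comm (i j : σ) (p : MvPolynomial σ R) :
    pderiv i (pderiv j p) = pderiv j (pderiv i p) := by
  classical
  have h : ⁅pderiv (R := R) i, pderiv j⁆ = 0 := derivation_ext fun k => by
    rw [Derivation.commutator_apply, pderiv_X, pderiv_X]
    simp [Pi.single_apply, apply_ite]
  simpa [Derivation.commutator_apply, sub_eq_zero] using DFunLike.congr_fun h p

variable [Fintype σ]

/-- The Laplace operator on polynomials; the polynomials in its kernel are the harmonic ones. -/
noncomputable def laplacian : MvPolynomial σ R →ₗ[R] MvPolynomial σ R :=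
  ∑ i, (pderiv i).toLinearMap ∘ₗ (pderiv i).toLinearMap

theorem laplacian_apply (p : MvPolynomial σ R) :
    laplacian p = ∑ i, pderiv i (pderiv i p) := by
  simp [laplacian]

theorem laplacian_X_mul (i : σ) (p : MvPolynomial σ R) :
    laplacian (X i * p) = X i * laplacian p + 2 * pderiv i p := by
  classical
  have hterm (k : σ) : pderiv k (pderiv k (X i * p)) =
      X i * pderiv k (pderiv k p) + 2 * (if k = i then pderiv k p else 0) := by
    rcases eq_or_ne k i with rfl | hk
    · simp only [pderiv_mul, map_add, pderiv_X_self, pderiv_one, if_true]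
      ring
    · simp [pderiv_X_of_ne hk.symm, hk]
  simp only [laplacian_apply, hterm, Finset.sum_add_distrib, ← Finset.mul_sum,
    Finset.sum_ite_eq', Finset.mem_univ, if_true]

end Polynomials

section CauchyRiemann

variable {σ R : Type*} [CommRing R] {i j : σ} {u v u' v' : MvPolynomial σ R}

/-- The polynomials `u` and `v` are the real and imaginary part of a holomorphic polynomial in
`X i + √-1 * X j`: they satisfy the Cauchy–Riemann equations in the variables `i`, `j`, and their
derivatives in all other variables vanish. -/
structure IsConjugatePair (i j : σ) (u v : MvPolynomial σ R) : Prop where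
  pderiv_fst : pderiv i u = pderiv j v
  pderiv_snd : pderiv j u = -pderiv i v
  pderiv_of_ne : ∀ k, k ≠ i → k ≠ j → pderiv k u = 0 ∧ pderiv k v = 0

namespace IsConjugatePair

theorem one_zero : IsConjugatePair i j (1 : MvPolynomial σ R) 0 where
  pderiv_fst := by simp
  pderiv_snd := by simp
  pderiv_of_ne := by simp

theorem X_X (hij : i ≠ j) : IsConjugatePair i j (X i : MvPolynomial σ R) (X j) where
  pderiv_fst := by simp
  pderiv_snd := by simp [pderiv_X_of_ne, hij, hij.symm]
  pderiv_of_ne _ hi hj := ⟨pderiv_X_of_ne hi.symm, pderiv_X_of_ne hj.symm⟩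

theorem mul (h : IsConjugatePair i j u v) (h' : IsConjugatePair i j u' v') :
    IsConjugatePair i j (u * u' - v * v') (u * v' + v * u') where
  pderiv_fst := by
    simp only [map_sub, map_add, pderiv_mul, h.pderiv_fst, h.pderiv_snd, h'.pderiv_fst,
      h'.pderiv_snd]
    ring
  pderiv_snd := by
    simp only [map_sub, map_add, pderiv_mul, h.pderiv_fst, h.pderiv_snd, h'.pderiv_fst,
      h'.pderiv_snd]
    ring
  pderiv_of_ne k hi hj := by simp [h.pderiv_of_ne k hi hj, h'.pderiv_of_ne k hi hj]

theorem swap (h : IsConjugatePair i j u v) : IsConjugatePair i j v (-u) where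
  pderiv_fst := by rw [map_neg, h.pderiv_snd, neg_neg]
  pderiv_snd := by rw [map_neg, neg_neg, h.pderiv_fst]
  pderiv_of_ne k hi hj := by simp [h.pderiv_of_ne k hi hj]

theorem laplacian_fst [Fintype σ] (hij : i ≠ j) (h : IsConjugatePair i j u v) :
    laplacian u = 0 := by
  have hother (k : σ) (hk : k ≠ i ∧ k ≠ j) : pderiv k (pderiv k u) = 0 := by
    rw [(h.pderiv_of_ne k hk.1 hk.2).1, map_zero]
  rw [laplacian_apply, Fintype.sum_eq_add i j hij hother, h.pderiv_fst, h.pderiv_snd, map_neg,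
    pderiv_pderiv_comm, add_neg_cancel]

theorem laplacian_snd [Fintype σ] (hij : i ≠ j) (h : IsConjugatePair i j u v) :
    laplacian v = 0 :=
  h.swap.laplacian_fst hij

end IsConjugatePair

end CauchyRiemann

section PlanePower

variable {σ R : Type*} [CommRing R] {i j k : σ}

/-- The power `(X i + √-1 * X j) ^ n`, whose components `re` and `im` are real polynomials.
`QuadraticAlgebra _ (-1) 0` adjoins a square root of `-1`. -/
noncomputable def planePow (i j : σ) (n : ℕ) : QuadraticAlgebra (MvPolynomial σ R) (-1) 0 :=
  ⟨X i, X j⟩ ^ n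

theorem planePow_zero : planePow (R := R) i j 0 = ⟨1, 0⟩ :=
  pow_zero _

theorem planePow_succ (n : ℕ) :
    planePow (R := R) i j (n + 1) =
      ⟨(planePow i j n).re * X i - (planePow i j n).im * X j,
        (planePow i j n).re * X j + (planePow i j n).im * X i⟩ := by
  ext1 <;> simp [planePow, pow_succ, sub_eq_add_neg]

theorem isConjugatePair_planePow (hij : i ≠ j) (n : ℕ) :
    IsConjugatePair i j (planePow (R := R) i j n).re (planePow i j n).im := by
  induction n with
  | zero => simpa only [planePow_zero] using IsConjugatePair.one_zero
  | succ n ih => simpa only [planePow_succ] using ih.mul (.X_X hij)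

theorem isHomogeneous_planePow (n : ℕ) :
    (planePow (R := R) i j n).re.IsHomogeneous n ∧
      (planePow (R := R) i j n).im.IsHomogeneous n := by
  induction n with
  | zero => exact ⟨isHomogeneous_one _ _, isHomogeneous_zero _ _ _⟩
  | succ n ih =>
    have hX (l : σ) := isHomogeneous_X R l
    rw [planePow_succ]
    exact ⟨(ih.1.mul (hX i)).sub (ih.2.mul (hX j)), (ih.1.mul (hX j)).add (ih.2.mul (hX i))⟩

theorem eval_planePow (x : σ → ℝ) (n : ℕ) :
    eval x (planePow i j n).re = ((⟨x i, x j⟩ : ℂ) ^ n).re ∧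
      eval x (planePow i j n).im = ((⟨x i, x j⟩ : ℂ) ^ n).im := by
  induction n with
  | zero => simp [planePow_zero]
  | succ n ih => simp [planePow_succ, pow_succ, ih]

/-- The polynomial `Re w ^ (n + 1) + X k * Im w ^ n` with `w = X i + √-1 * X j`. It is the
first-order rotation `f + (n + 1)⁻¹ * (X j * ∂ₖ - X k * ∂ⱼ) f` of `f = Re w ^ (n + 1)`. -/
noncomputable def tiltedPow (i j k : σ) (n : ℕ) : MvPolynomial σ R :=
  X k * (planePow i j n).im + (planePow i j (n + 1)).re

theorem isHomogeneous_tiltedPow (n : ℕ) :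
    (tiltedPow (R := R) i j k n).IsHomogeneous (n + 1) := by
  have hX := (isHomogeneous_X R k).mul (isHomogeneous_planePow (R := R) (i := i) (j := j) n).2
  rw [add_comm] at hX
  exact hX.add (isHomogeneous_planePow _).1

theorem laplacian_tiltedPow [Fintype σ] (hij : i ≠ j) (hki : k ≠ i) (hkj : k ≠ j) (n : ℕ) :
    laplacian (tiltedPow (R := R) i j k n) = 0 := by
  have hn := isConjugatePair_planePow (R := R) hij n
  rw [tiltedPow, map_add, laplacian_X_mul, hn.laplacian_snd hij, (hn.pderiv_of_ne k hki hkj).2,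
    (isConjugatePair_planePow hij _).laplacian_fst hij]
  simp

end PlanePower

section ChartZeros

open Complex ComplexConjugate

theorem norm_one_add_two_I_mul_eq_one_iff (w : ℂ) :
    ‖1 + 2 * I * w‖ = 1 ↔ w.im = normSq w := by
  have h : ‖1 + 2 * I * w‖ ^ 2 = 1 - 4 * (w.im - normSq w) := by
    simp only [← normSq_eq_norm_sq, normSq_apply, add_re, add_im, mul_re, mul_im, one_re, one_im,
      I_re, I_im, re_ofNat, im_ofNat]
    ring
  rw [← pow_eq_one_iff_of_nonneg (norm_nonneg _) two_ne_zero, h]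
  constructor <;> intro <;> linarith

theorem one_add_two_I_mul_eq_div_conj {w : ℂ} (hw : w ≠ 0) (h : w.im = normSq w) :
    1 + 2 * I * w = w / conj w := by
  rw [eq_div_iff (by simpa using hw), add_mul, mul_assoc, mul_conj, ← h]
  apply Complex.ext <;> simp
  ring

theorem div_conj_pow_eq_one_iff {w : ℂ} (hw : w ≠ 0) (n : ℕ) :
    (w / conj w) ^ n = 1 ↔ (w ^ n).im = 0 := by
  have hconj : conj w ≠ 0 := by simpa using hw
  rw [div_pow, div_eq_one_iff_eq (pow_ne_zero n hconj), ← map_pow, eq_comm, conj_eq_iff_im]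

theorem im_pow_add_re_pow_succ_eq_zero_iff {w : ℂ} (hw : w ≠ 0) {n : ℕ}
    (him : (w ^ (n + 1)).im = 0) :
    (w ^ n).im + (w ^ (n + 1)).re = 0 ↔ w.im = normSq w := by
  have hnormSq : normSq w ≠ 0 := normSq_eq_zero.not.mpr hw
  have hre : (w ^ (n + 1)).re ≠ 0 := fun h => pow_ne_zero (n + 1) hw (Complex.ext h him)
  have hmul : (w ^ n).im * normSq w = -((w ^ (n + 1)).re * w.im) := by
    have h : w ^ n * (normSq w : ℂ) = w ^ (n + 1) * conj w := by rw [← mul_conj]; ring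
    simpa [him] using congrArg im h
  have hfactor : ((w ^ n).im + (w ^ (n + 1)).re) * normSq w =
      (w ^ (n + 1)).re * (normSq w - w.im) := by linear_combination hmul
  rw [← mul_eq_zero_iff_right hnormSq, hfactor, mul_eq_zero_iff_left hre, sub_eq_zero, eq_comm]

theorem im_pow_succ_eq_zero_and_iff_pow_eq_one (w : ℂ) (n : ℕ) :
    (w ^ (n + 1)).im = 0 ∧ (w ^ n).im + (w ^ (n + 1)).re = 0 ↔
      (1 + 2 * I * w) ^ (n + 1) = 1 := by
  rcases eq_or_ne w 0 with rfl | hw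
  · cases n <;> simp
  calc
    _ ↔ (w ^ (n + 1)).im = 0 ∧ w.im = normSq w :=
      and_congr_right (im_pow_add_re_pow_succ_eq_zero_iff hw)
    _ ↔ (1 + 2 * I * w) ^ (n + 1) = 1 ∧ w.im = normSq w :=
      and_congr_left fun h => by
        rw [one_add_two_I_mul_eq_div_conj hw h, div_conj_pow_eq_one_iff hw]
    _ ↔ _ := and_iff_left_of_imp fun h =>
      (norm_one_add_two_I_mul_eq_one_iff w).mp (norm_eq_one_of_pow_eq_one h n.succ_ne_zero)

theorem ncard_setOf_pow_eq_one {n : ℕ} (hn : n ≠ 0) : {ζ : ℂ | ζ ^ n = 1}.ncard = n := by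
  have h : {ζ : ℂ | ζ ^ n = 1} = (Polynomial.nthRootsFinset n (1 : ℂ) : Set ℂ) := by
    ext ζ
    simp [Polynomial.mem_nthRootsFinset (Nat.pos_of_ne_zero hn)]
  rw [h, Set.ncard_coe_finset, (isPrimitiveRoot_exp n hn).card_nthRootsFinset]

theorem ncard_setOf_im_pow_succ_eq_zero_and (n : ℕ) :
    {w : ℂ | (w ^ (n + 1)).im = 0 ∧ (w ^ n).im + (w ^ (n + 1)).re = 0}.ncard = n + 1 := by
  have hbij : Function.Bijective fun w : ℂ => 1 + 2 * I * w :=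
    (AddGroup.addLeft_bijective 1).comp (mulLeft_bijective₀ (2 * I) (by simp))
  simp only [im_pow_succ_eq_zero_and_iff_pow_eq_one]
  calc
    _ = {ζ : ℂ | ζ ^ (n + 1) = 1}.ncard :=
      Set.ncard_preimage_of_injective_subset_range hbij.injective fun ζ _ => hbij.surjective ζ
    _ = n + 1 := ncard_setOf_pow_eq_one n.succ_ne_zero

end ChartZeros

section Cone

variable {E : Type*} [NormedAddCommGroup E] [NormedSpace ℝ E]

theorem injOn_div_norm_smul (φ : E →ₗ[ℝ] ℝ) :
    Set.InjOn (fun a : E × ℝ => (a.2 / ‖a.1‖) • a.1) ({s | φ s = 1} ×ˢ {0}ᶜ) := by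
  rintro ⟨s, ε⟩ ⟨hs : φ s = 1, hε : ε ≠ 0⟩ ⟨t, δ⟩ ⟨ht : φ t = 1, -⟩
    (h : (ε / ‖s‖) • s = (δ / ‖t‖) • t)
  have hnorm : ‖s‖ ≠ 0 := norm_ne_zero_iff.mpr fun h0 => by simp [h0] at hs
  have hratio : ε / ‖s‖ = δ / ‖t‖ := by simpa [hs, ht] using congrArg φ h
  obtain rfl : s = t := smul_right_injective E (div_ne_zero hε hnorm) (by rwa [← hratio] at h)
  rw [(div_left_inj' hnorm).mp hratio]

theorem ncard_norm_eq_one_eq_two_mul (φ : E →ₗ[ℝ] ℝ) {K : Set E}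
    (hsmul : ∀ c : ℝ, c ≠ 0 → ∀ x ∈ K, c • x ∈ K) (hφ : ∀ x ∈ K, φ x = 0 → x = 0) :
    {x ∈ K | ‖x‖ = 1}.ncard = 2 * {x ∈ K | φ x = 1}.ncard := by
  set S := {x ∈ K | φ x = 1}
  let normalize : E × ℝ → E := fun a => (a.2 / ‖a.1‖) • a.1
  have hinj : Set.InjOn normalize (S ×ˢ {1, -1}) :=
    (injOn_div_norm_smul φ).mono (Set.prod_mono (fun _ hs => hs.2) (by simp))
  have himage : {x ∈ K | ‖x‖ = 1} = normalize '' (S ×ˢ {1, -1}) := by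
    ext x
    constructor
    · rintro ⟨hxK, hx⟩
      have hφx : φ x ≠ 0 := fun h => by simp [hφ x hxK h] at hx
      refine ⟨((φ x)⁻¹ • x, φ x / |φ x|), ⟨⟨hsmul _ (inv_ne_zero hφx) x hxK, ?_⟩, ?_⟩, ?_⟩
      · simp [hφx]
      · rcases abs_choice (φ x) with h | h <;> simp [h, hφx]
      · simp [normalize, norm_smul, hx, smul_smul, hφx]
    · rintro ⟨⟨s, ε⟩, ⟨hs, hε⟩, rfl⟩
      have habs : |ε| = 1 := by rcases hε with rfl | rfl <;> simp
      have hε0 : ε ≠ 0 := abs_ne_zero.mp (by simp [habs])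
      have hs0 : ‖s‖ ≠ 0 := norm_ne_zero_iff.mpr fun h => by simpa [h] using hs.2
      exact ⟨hsmul _ (div_ne_zero hε0 hs0) s hs.1, by simp [normalize, norm_smul, habs, hs0]⟩
  rw [himage, hinj.ncard_image, Set.ncard_prod, Set.ncard_pair (by norm_num), mul_comm]

end Cone

section CommonZeros

/-- The common zeros in Euclidean space of two polynomials. -/
def commonZeros {σ : Type*} (p q : MvPolynomial σ ℝ) : Set (EuclideanSpace ℝ σ) :=
  {x | eval (fun i => x i) p = 0 ∧ eval (fun i => x i) q = 0}

theorem smul_mem_commonZeros {σ : Type*} {p q : MvPolynomial σ ℝ} {m n : ℕ}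
    (hp : p.IsHomogeneous m) (hq : q.IsHomogeneous n) (c : ℝ) {x : EuclideanSpace ℝ σ}
    (hx : x ∈ commonZeros p q) : c • x ∈ commonZeros p q := by
  constructor
  · exact (eval_smul_of_isHomogeneous hp c fun i => x i).trans (by rw [hx.1, mul_zero])
  · exact (eval_smul_of_isHomogeneous hq c fun i => x i).trans (by rw [hx.2, mul_zero])

theorem mem_commonZeros_planePow_tiltedPow {σ : Type*} {i j k : σ} {n : ℕ}
    {x : EuclideanSpace ℝ σ} :
    x ∈ commonZeros (planePow i j (n + 1)).im (tiltedPow i j k n) ↔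
      ((⟨x i, x j⟩ : ℂ) ^ (n + 1)).im = 0 ∧
        x k * ((⟨x i, x j⟩ : ℂ) ^ n).im + ((⟨x i, x j⟩ : ℂ) ^ (n + 1)).re = 0 := by
  simp [commonZeros, tiltedPow, eval_planePow]

theorem eq_zero_of_mem_commonZeros {n : ℕ} {x : EuclideanSpace ℝ (Fin 3)}
    (hx : x ∈ commonZeros (planePow 0 1 (n + 1)).im (tiltedPow 0 1 2 n)) (hx2 : x 2 = 0) :
    x = 0 := by
  obtain ⟨him, hre⟩ := mem_commonZeros_planePow_tiltedPow.mp hx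
  have hw : (⟨x 0, x 1⟩ : ℂ) = 0 :=
    eq_zero_of_pow_eq_zero (Complex.ext (by simpa [hx2] using hre) him)
  ext l
  fin_cases l
  · exact congrArg Complex.re hw
  · exact congrArg Complex.im hw
  · exact hx2

theorem ncard_commonZeros_inter_chart (n : ℕ) :
    {x ∈ commonZeros (planePow 0 1 (n + 1)).im (tiltedPow (0 : Fin 3) 1 2 n) |
      x 2 = 1}.ncard = n + 1 := by
  let chart : ℂ → EuclideanSpace ℝ (Fin 3) := fun w => !₂[w.re, w.im, 1]
  have hinj : Function.Injective chart := fun w w' h =>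
    Complex.ext (congrArg (fun x => x 0) h) (congrArg (fun x => x 1) h)
  have himage : {x ∈ commonZeros (planePow 0 1 (n + 1)).im (tiltedPow (0 : Fin 3) 1 2 n) |
      x 2 = 1} =
      chart '' {w | (w ^ (n + 1)).im = 0 ∧ (w ^ n).im + (w ^ (n + 1)).re = 0} := by
    ext x
    constructor
    · rintro ⟨hx, hx2⟩
      refine ⟨⟨x 0, x 1⟩, by simpa [hx2] using mem_commonZeros_planePow_tiltedPow.mp hx, ?_⟩
      ext l
      fin_cases l <;> simp [chart, hx2]
    · rintro ⟨w, hw, rfl⟩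
      refine ⟨mem_commonZeros_planePow_tiltedPow.mpr ?_, by simp [chart]⟩
      simpa [chart] using hw
  rw [himage, Set.ncard_image_of_injective _ hinj, ncard_setOf_im_pow_succ_eq_zero_and]

theorem ncard_commonZeros_inter_sphere (n : ℕ) :
    {x ∈ commonZeros (planePow 0 1 (n + 1)).im (tiltedPow (0 : Fin 3) 1 2 n) |
      ‖x‖ = 1}.ncard = 2 * (n + 1) := by
  set K := commonZeros (planePow 0 1 (n + 1)).im (tiltedPow (0 : Fin 3) 1 2 n)
  have hsmul (c : ℝ) (_ : c ≠ 0) (x) (hx : x ∈ K) : c • x ∈ K :=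
    smul_mem_commonZeros (isHomogeneous_planePow (n + 1)).2 (isHomogeneous_tiltedPow n) c hx
  rw [ncard_norm_eq_one_eq_two_mul (EuclideanSpace.projₗ 2) hsmul
    fun x hx => eq_zero_of_mem_commonZeros hx]
  exact congrArg (2 * ·) (ncard_commonZeros_inter_chart n)

end CommonZeros

end SphericalHarmonic

open SphericalHarmonic

/-- For any `m ≥ 1` there exist two spherical harmonics of degree `m` on `S²`
(i.e. restrictions to the unit sphere of homogeneous harmonic polynomials of
degree `m` in three variables) whose set of common zeros consists of exactly
`2m` points. -/
theorem stmt16 (m : ℕ) (hm : 1 ≤ m) :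
    ∃ p q : MvPolynomial (Fin 3) ℝ,
      p.IsHomogeneous m ∧ q.IsHomogeneous m ∧
      (∑ i, pderiv i (pderiv i p)) = 0 ∧ (∑ i, pderiv i (pderiv i q)) = 0 ∧
      {x : EuclideanSpace ℝ (Fin 3) | ‖x‖ = 1 ∧
        eval (fun i => x i) p = 0 ∧ eval (fun i => x i) q = 0}.ncard = 2 * m := by
  obtain ⟨n, rfl⟩ := Nat.exists_eq_add_of_le' hm
  simp only [← laplacian_apply]
  refine ⟨(planePow 0 1 (n + 1)).im, tiltedPow 0 1 2 n, (isHomogeneous_planePow _).2,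
    isHomogeneous_tiltedPow n, (isConjugatePair_planePow (by decide) _).laplacian_snd (by decide),
    laplacian_tiltedPow (by decide) (by decide) (by decide) n, ?_⟩
  simpa only [commonZeros, Set.mem_ofPred_eq, and_comm] using ncard_commonZeros_inter_sphere n
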